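/- Let (R, m) be a commutative Noetherian local ring of Krull dimension n and let I be an ideal of R such that cd(I) = ht(I), where cd(I) = cd(I,R) and ht(I) is the height of I. Then dim(R) = ht(I) + dim(R/I). -/

import Mathlib

universe u

open CategoryTheory

/-- The cohomological dimension of `M` with respect to `I`:
`cd(I,M) = sup { i ∈ ℕ | H^i_I(M) ≠ 0 }`, as an element of `ℕ∞`. -/
noncomputable def cohomologicalDimension {R : Type u} [CommRing R] (I : Ideal R)
    (M : ModuleCat.{u} R) : ℕ∞ :=
  sSup {c : ℕ∞ | ∃ i : ℕ, c = i ∧ Nontrivial ((localCohomology I i).obj M)}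

/-- The height of an ideal: the infimum of the heights of the prime ideals containing it. -/
noncomputable def idealHeight {R : Type u} [CommRing R] (I : Ideal R) : ℕ∞ :=
  ⨅ (p : PrimeSpectrum R) (_ : I ≤ p.asIdeal), Order.height p

/-!
The inequality `ht I + dim (R/I) ≤ dim R` always holds, so the theorem amounts to
`dim R ≤ cd(I) + dim (R/I)`. Adding one element to an ideal raises the largest degree in which
local cohomology survives by at most one, and adding the lifts of a system of parameters of `R/I`
turns `I` into an `𝔪`-primary ideal. Hence `H^i_𝔪(R) = 0` for `i > cd(I) + dim (R/I)`, and the bound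
follows from Grothendieck's theorem that `H^i_𝔪(R) ≠ 0` for `i = dim R`.

The nonvanishing is proved for the quotients `R/p`, by induction on the degree and then on `p`. If
`H^i_𝔪(R/p)` vanishes for `i > c + 1`, then `H^{c+1}_𝔪` is right exact on finite `R/p`-modules, so
that `H^{c+1}_𝔪(R/a) = H ⊗ R/a` for `H = H^{c+1}_𝔪(R/p)` and all `a ⊇ p`. Were `dim (R/p) > c + 1`,
there would be infinitely many primes `q` strictly between `p` and a suitable `p₂`, and by induction
`q H ≠ H` for all of them. As `H` is Artinian, finitely many such primes `q₁, …, q_r` and a further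
one `q` satisfy `(q₁ ⋯ q_r + q) H ≠ H`, although `dim R/(q₁ ⋯ q_r + q) ≤ c` forces the local
cohomology of that quotient to vanish in degree `c + 1`.
-/

section DirectLimit

variable {R ι : Type*} [CommRing R] [Preorder ι] [DecidableEq ι] {G G' G'' : ι → Type*}
  [∀ i, AddCommGroup (G i)] [∀ i, Module R (G i)]
  [∀ i, AddCommGroup (G' i)] [∀ i, Module R (G' i)]
  [∀ i, AddCommGroup (G'' i)] [∀ i, Module R (G'' i)]
  {t : ∀ i j, i ≤ j → G i →ₗ[R] G j} {t' : ∀ i j, i ≤ j → G' i →ₗ[R] G' j}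
  {t'' : ∀ i j, i ≤ j → G'' i →ₗ[R] G'' j}

lemma exact_directLimitMap [Nonempty ι] [IsDirectedOrder ι] [DirectedSystem G'' (t'' · · ·)]
    {φ : ∀ i, G i →ₗ[R] G' i} {ψ : ∀ i, G' i →ₗ[R] G'' i}
    (hφ : ∀ i j h, φ j ∘ₗ t i j h = t' i j h ∘ₗ φ i)
    (hψ : ∀ i j h, ψ j ∘ₗ t' i j h = t'' i j h ∘ₗ ψ i) (hex : ∀ i, Function.Exact (φ i) (ψ i)) :
    Function.Exact (Module.DirectLimit.map φ hφ) (Module.DirectLimit.map ψ hψ) := by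
  refine LinearMap.exact_of_comp_of_mem_range ?_ fun z hz => ?_
  · rw [Module.DirectLimit.map_comp]
    ext i x
    simp [(hex i).apply_apply_eq_zero]
  · obtain ⟨i, x, rfl⟩ := Module.DirectLimit.exists_of z
    rw [Module.DirectLimit.map_apply_of] at hz
    obtain ⟨j, hij, hj⟩ := Module.DirectLimit.of.zero_exact hz
    obtain ⟨y, hy⟩ := (hex j (t' i j hij x)).1 ((LinearMap.congr_fun (hψ i j hij) x).trans hj)
    exact ⟨Module.DirectLimit.of R ι G t j y,
      by rw [Module.DirectLimit.map_apply_of, hy, Module.DirectLimit.of_f]⟩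

end DirectLimit

section ShortExact

variable {R : Type*} [CommRing R] {M N L : Type*} [AddCommGroup M] [Module R M] [AddCommGroup N]
  [Module R N] [AddCommGroup L] [Module R L]

/-- `0 → M → N → L → 0` is a short exact sequence of modules. -/
structure IsShortExact (f : M →ₗ[R] N) (g : N →ₗ[R] L) : Prop where
  injective : Function.Injective f
  exact : Function.Exact f g
  surjective : Function.Surjective g

lemma isShortExact_mkQ_range {f : M →ₗ[R] N} (hf : Function.Injective f) :
    IsShortExact f (LinearMap.range f).mkQ :=
  ⟨hf, LinearMap.exact_map_mkQ_range f, Submodule.mkQ_surjective _⟩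

lemma isShortExact_subtype_ker {g : N →ₗ[R] L} (hg : Function.Surjective g) :
    IsShortExact (LinearMap.ker g).subtype g :=
  ⟨Submodule.injective_subtype _, LinearMap.exact_subtype_ker_map g, hg⟩

end ShortExact

lemma IsShortExact.shortExact_shortComplex {R : Type u} [CommRing R] {M N L : Type u}
    [AddCommGroup M] [Module R M] [AddCommGroup N] [Module R N] [AddCommGroup L] [Module R L]
    {f : M →ₗ[R] N} {g : N →ₗ[R] L} (h : IsShortExact f g) :
    (ModuleCat.shortComplexOfCompEqZero f g h.exact.linearMap_comp_eq_zero).ShortExact :=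
  ModuleCat.shortComplex_shortExact _ h.exact h.injective h.surjective

lemma exists_injective_presentation (R : Type u) [CommRing R] (M : Type u) [AddCommGroup M]
    [Module R M] :
    ∃ (E L : ModuleCat.{u} R) (f : M →ₗ[R] E) (g : E →ₗ[R] L),
      Module.Injective R E ∧ IsShortExact f g := by
  obtain ⟨E, hE, f, hf⟩ := EnoughInjectives.presentation (ModuleCat.of R M)
  exact ⟨E, .of R _, f.hom, _, (Module.injective_iff_injective_object R E).2 hE,
    isShortExact_mkQ_range ((ModuleCat.mono_iff_injective f).1 hf)⟩

/-! ### The colimit of Ext modules -/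

namespace ExtColim

open CategoryTheory.Abelian

variable {R : Type u} [CommRing R]

/-- The quotient map `R ⧸ I ^ l → R ⧸ I ^ k`, as a morphism of `ModuleCat R`. -/
def proj (I : Ideal R) {k l : ℕ} (h : k ≤ l) :
    ModuleCat.of R (R ⧸ I ^ l) ⟶ ModuleCat.of R (R ⧸ I ^ k) :=
  ModuleCat.ofHom (Submodule.mapQ _ _ LinearMap.id (Ideal.pow_le_pow_right h))

lemma proj_refl (I : Ideal R) (k : ℕ) : proj I (le_refl k) = 𝟙 _ := by
  ext
  rfl

lemma proj_comp (I : Ideal R) {k l m : ℕ} (h : k ≤ l) (h' : l ≤ m) :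
    proj I h' ≫ proj I h = proj I (h.trans h') := by
  ext
  rfl

/-- The transition map `Ext^i(R/I^k, M) → Ext^i(R/I^l, M)` of the system defining local
cohomology. -/
noncomputable def res (I : Ideal R) (i : ℕ) (M : Type u) [AddCommGroup M] [Module R M]
    (k l : ℕ) (h : k ≤ l) :
    Ext (ModuleCat.of R (R ⧸ I ^ k)) (ModuleCat.of R M) i →ₗ[R]
      Ext (ModuleCat.of R (R ⧸ I ^ l)) (ModuleCat.of R M) i :=
  (Ext.mk₀ (proj I h)).precompOfLinear R _ (zero_add i)

instance (I : Ideal R) (i : ℕ) (M : Type u) [AddCommGroup M] [Module R M] :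
    DirectedSystem (fun k : ℕ => Ext (ModuleCat.of R (R ⧸ I ^ k)) (ModuleCat.of R M) i)
      (fun k l h => res I i M k l h) where
  map_self k x := by simp [res, proj_refl]
  map_map k l m h h' x := by simp [res, proj_comp]

end ExtColim

/-- The local cohomology module `H^i_I(M)` in the form `colim_k Ext^i(R/I^k, M)`, with Mathlib's
derived-category `Ext`, for which long exact sequences are available. -/
def ExtColim {R : Type u} [CommRing R] (I : Ideal R) (i : ℕ) (M : Type u) [AddCommGroup M]
    [Module R M] : Type u :=
  Module.DirectLimit (fun k : ℕ => Abelian.Ext (ModuleCat.of R (R ⧸ I ^ k)) (ModuleCat.of R M) i)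
    (ExtColim.res I i M)

namespace ExtColim

open CategoryTheory.Abelian

variable {R : Type u} [CommRing R] {I : Ideal R} {i : ℕ} {M N L : Type u} [AddCommGroup M]
  [Module R M] [AddCommGroup N] [Module R N] [AddCommGroup L] [Module R L]

noncomputable instance : AddCommGroup (ExtColim I i M) :=
  Module.DirectLimit.addCommGroup _ _

noncomputable instance : Module R (ExtColim I i M) :=
  Module.DirectLimit.module _ _

/-- The canonical map from `Ext^i(R/I^k, M)` to the colimit. -/
noncomputable def of (k : ℕ) :
    Ext (ModuleCat.of R (R ⧸ I ^ k)) (ModuleCat.of R M) i →ₗ[R] ExtColim I i M :=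
  Module.DirectLimit.of R ℕ
    (fun k : ℕ => Ext (ModuleCat.of R (R ⧸ I ^ k)) (ModuleCat.of R M) i) (res I i M) k

lemma exists_of (z : ExtColim I i M) : ∃ k x, of k x = z :=
  Module.DirectLimit.exists_of z

lemma of_res {k l : ℕ} (h : k ≤ l) (x : Ext (ModuleCat.of R (R ⧸ I ^ k)) (ModuleCat.of R M) i) :
    of l (res I i M k l h x) = of k x :=
  Module.DirectLimit.of_f

lemma hom_ext {P : Type*} [AddCommGroup P] [Module R P] {φ ψ : ExtColim I i M →ₗ[R] P}
    (h : ∀ k x, φ (of k x) = ψ (of k x)) : φ = ψ :=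
  Module.DirectLimit.hom_ext fun k => LinearMap.ext (h k)

lemma subsingleton_of_forall_exists
    (h : ∀ k : ℕ, ∃ l, k ≤ l ∧
      Subsingleton (Ext (ModuleCat.of R (R ⧸ I ^ l)) (ModuleCat.of R M) i)) :
    Subsingleton (ExtColim I i M) := by
  refine subsingleton_of_forall_eq 0 fun z => ?_
  obtain ⟨k, x, rfl⟩ := exists_of z
  obtain ⟨l, hkl, _⟩ := h k
  rw [← of_res hkl, Subsingleton.elim (res I i M k l hkl x) 0, map_zero]

variable (I i) in
/-- The map induced on local cohomology by a linear map. -/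
noncomputable def map (f : M →ₗ[R] N) : ExtColim I i M →ₗ[R] ExtColim I i N :=
  Module.DirectLimit.map (f := res I i M) (f' := res I i N)
    (fun _ => (Ext.mk₀ (ModuleCat.ofHom f)).postcompOfLinear R _ (add_zero i))
    (fun k l h => LinearMap.ext fun x => by simp [res])

@[simp] lemma map_of (f : M →ₗ[R] N) (k : ℕ)
    (x : Ext (ModuleCat.of R (R ⧸ I ^ k)) (ModuleCat.of R M) i) :
    map I i f (of k x) = of k (x.comp (Ext.mk₀ (ModuleCat.ofHom f)) (add_zero i)) :=
  Module.DirectLimit.map_apply_of ..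

lemma map_comp (g : N →ₗ[R] L) (f : M →ₗ[R] N) : map I i (g ∘ₗ f) = map I i g ∘ₗ map I i f :=
  hom_ext fun k x => by simp [ModuleCat.ofHom_comp]

lemma map_id : map I i (LinearMap.id : M →ₗ[R] M) = LinearMap.id :=
  hom_ext fun k x => by simp

lemma map_surjective_of_linearEquiv (e : M ≃ₗ[R] N) :
    Function.Surjective (map I i e.toLinearMap) := fun z => ⟨map I i e.symm.toLinearMap z, by
  rw [← LinearMap.comp_apply, ← map_comp, LinearEquiv.comp_symm, map_id, LinearMap.id_apply]⟩

variable (I i M N) in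
/-- `ExtColim.map` as a linear function of the linear map. -/
@[simps]
noncomputable def mapₗ : (M →ₗ[R] N) →ₗ[R] ExtColim I i M →ₗ[R] ExtColim I i N where
  toFun := map I i
  map_add' f g := hom_ext fun k x => by simp [ModuleCat.ofHom_add, Ext.mk₀_add]
  map_smul' r f := hom_ext fun k x => by
    have h : ModuleCat.ofHom (r • f) = r • ModuleCat.ofHom f := rfl
    simp [h, Ext.mk₀_smul]

lemma map_sum_smul {ι : Type*} (s : Finset ι) (r : ι → R) (f : ι → M →ₗ[R] N) :
    map I i (∑ a ∈ s, r a • f a) = ∑ a ∈ s, r a • map I i (f a) := by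
  simpa only [_root_.map_smul, mapₗ_apply] using
    map_sum (mapₗ I i M N) (fun a => r a • f a) s

lemma map_smul_id (r : R) (z : ExtColim I i M) :
    map I i (r • (LinearMap.id : M →ₗ[R] M)) z = r • z :=
  LinearMap.congr_fun (((mapₗ I i M M).map_smul r _).trans (congrArg (r • ·) map_id)) z

section LongExactSequence

variable {f : M →ₗ[R] N} {g : N →ₗ[R] L} (h : IsShortExact f g)

variable (I i) in
/-- The connecting homomorphism of the long exact sequence of local cohomology. -/
noncomputable def δ : ExtColim I i L →ₗ[R] ExtColim I (i + 1) M :=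
  Module.DirectLimit.map (f := res I i L) (f' := res I (i + 1) M)
    (fun _ => h.shortExact_shortComplex.extClass.postcompOfLinear R _ rfl)
    (fun _ _ _ => LinearMap.ext fun _ => Ext.comp_assoc _ _ _ (zero_add i) rfl (by omega))

include h

lemma exact_map_map : Function.Exact (map I i f) (map I i g) :=
  exact_directLimitMap _ _ fun _ => LinearMap.exact_of_comp_of_mem_range
    (LinearMap.ext fun x => by
      simp [← ModuleCat.ofHom_comp, h.exact.linearMap_comp_eq_zero])
    (Ext.covariant_sequence_exact₂ _ h.shortExact_shortComplex)

lemma exact_map_δ : Function.Exact (map I i g) (δ I i h) :=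
  exact_directLimitMap _ _ fun _ => LinearMap.exact_of_comp_of_mem_range
    (LinearMap.ext fun x => by
      simpa using (x.comp_assoc _ _ (add_zero i) (zero_add 1) (by omega)).trans
        ((congrArg (x.comp · rfl) h.shortExact_shortComplex.comp_extClass).trans (by simp)))
    (fun x hx => Ext.covariant_sequence_exact₃ _ h.shortExact_shortComplex x rfl hx)

lemma exact_δ_map : Function.Exact (δ I i h) (map I (i + 1) f) :=
  exact_directLimitMap _ _ fun _ => LinearMap.exact_of_comp_of_mem_range
    (LinearMap.ext fun x => by
      simpa using (x.comp_assoc _ _ rfl (add_zero 1) (by omega)).trans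
        ((congrArg (x.comp · rfl) h.shortExact_shortComplex.extClass_comp).trans (by simp)))
    (fun x hx => Ext.covariant_sequence_exact₁ _ h.shortExact_shortComplex x hx rfl)

end LongExactSequence

end ExtColim

/-! ### Power torsion -/

section PowTorsion

/-- The `I`-power torsion submodule `Γ_I(M)`, consisting of the elements of `M` annihilated by
some power of the ideal `I`. -/
def powTorsion {R : Type*} [CommRing R] (I : Ideal R) (M : Type*) [AddCommGroup M] [Module R M] :
    Submodule R M where
  carrier := {x | ∃ k : ℕ, ∀ a ∈ I ^ k, a • x = 0}
  add_mem' := by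
    rintro x y ⟨k, hk⟩ ⟨l, hl⟩
    refine ⟨k + l, fun a ha => ?_⟩
    rw [smul_add, hk a (Ideal.pow_le_pow_right (by omega) ha),
      hl a (Ideal.pow_le_pow_right (by omega) ha), add_zero]
  zero_mem' := ⟨0, fun a _ => smul_zero a⟩
  smul_mem' := by
    rintro r x ⟨k, hk⟩
    exact ⟨k, fun a ha => by rw [smul_comm, hk a ha, smul_zero]⟩

variable {R : Type*} [CommRing R] {I J : Ideal R} {M N : Type*} [AddCommGroup M] [Module R M]
  [AddCommGroup N] [Module R N]

lemma map_mem_powTorsion (f : M →ₗ[R] N) {x : M} (hx : x ∈ powTorsion I M) :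
    f x ∈ powTorsion I N := by
  obtain ⟨k, hk⟩ := hx
  exact ⟨k, fun a ha => by rw [← f.map_smul, hk a ha, f.map_zero]⟩

lemma mem_powTorsion_of_map {f : M →ₗ[R] N} (hf : Function.Injective f) {x : M}
    (hx : f x ∈ powTorsion I N) : x ∈ powTorsion I M := by
  obtain ⟨k, hk⟩ := hx
  exact ⟨k, fun a ha => hf (by rw [f.map_smul, hk a ha, f.map_zero])⟩

lemma powTorsion_powTorsion : powTorsion I (powTorsion I M) = ⊤ :=
  eq_top_iff.2 fun y _ => mem_powTorsion_of_map (powTorsion I M).injective_subtype y.2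

lemma powTorsion_eq_top_of_surjective {f : M →ₗ[R] N} (hf : Function.Surjective f)
    (h : powTorsion I M = ⊤) : powTorsion I N = ⊤ :=
  eq_top_iff.2 fun y _ => by
    obtain ⟨x, rfl⟩ := hf y
    exact map_mem_powTorsion f (h ▸ Submodule.mem_top)

lemma powTorsion_eq_top_of_le_annihilator (h : I ≤ Module.annihilator R M) :
    powTorsion I M = ⊤ :=
  eq_top_iff.2 fun y _ => ⟨1, fun a ha =>
    Module.mem_annihilator.1 (h (by rwa [pow_one] at ha)) y⟩

lemma powTorsion_quotient : powTorsion I (R ⧸ I) = ⊤ :=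
  powTorsion_eq_top_of_le_annihilator Ideal.annihilator_quotient.ge

lemma powTorsion_le_of_pow_le {k : ℕ} (h : J ^ k ≤ I) : powTorsion I M ≤ powTorsion J M := by
  rintro x ⟨l, hl⟩
  exact ⟨k * l, fun a ha => hl a (Ideal.pow_right_mono h l (pow_mul J k l ▸ ha))⟩

lemma powTorsion_antitone (h : J ≤ I) : powTorsion I M ≤ powTorsion J M :=
  powTorsion_le_of_pow_le (k := 1) (by rwa [pow_one])

lemma powTorsion_congr_radical [IsNoetherianRing R] (h : I.radical = J.radical) :
    powTorsion I M = powTorsion J M := by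
  have pow_le {I J : Ideal R} (h : I.radical = J.radical) : ∃ k, I ^ k ≤ J :=
    Ideal.exists_pow_le_of_le_radical_of_fg_radical (h ▸ Ideal.le_radical)
      (IsNoetherian.noetherian _)
  obtain ⟨k, hk⟩ := pow_le h
  obtain ⟨l, hl⟩ := pow_le h.symm
  exact le_antisymm (powTorsion_le_of_pow_le hl) (powTorsion_le_of_pow_le hk)

lemma mem_powTorsion_sup_span_singleton_iff {x : R} {y : M} :
    y ∈ powTorsion (I ⊔ Ideal.span {x}) M ↔ y ∈ powTorsion I M ∧ ∃ k : ℕ, x ^ k • y = 0 := by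
  constructor
  · rintro ⟨k, hk⟩
    exact ⟨powTorsion_antitone le_sup_left ⟨k, hk⟩, k,
      hk _ (Ideal.pow_mem_pow (Ideal.mem_sup_right (Ideal.mem_span_singleton_self x)) k)⟩
  · rintro ⟨⟨k, hk⟩, l, hl⟩
    refine ⟨k + l, fun a ha => ?_⟩
    obtain ⟨b, hb, c, hc, rfl⟩ := Submodule.mem_sup.1 (Ideal.sup_pow_add_le_pow_sup_pow ha)
    rw [Ideal.span_singleton_pow] at hc
    obtain ⟨r, rfl⟩ := Ideal.mem_span_singleton'.1 hc
    rw [add_smul, hk b hb, mul_smul, hl, smul_zero, add_zero]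

end PowTorsion

section AwaySurjective

/-- The localization map `M → M_x` is surjective, in elementwise form. -/
def IsAwaySurjective {R : Type*} [CommRing R] (x : R) (M : Type*) [AddCommGroup M] [Module R M] :
    Prop :=
  ∀ (y : M) (k : ℕ), ∃ (y' : M) (l : ℕ), x ^ l • (y - x ^ k • y') = 0

lemma IsAwaySurjective.of_surjective {R : Type*} [CommRing R] {x : R} {M N : Type*}
    [AddCommGroup M] [Module R M] [AddCommGroup N] [Module R N] (h : IsAwaySurjective x M)
    {f : M →ₗ[R] N} (hf : Function.Surjective f) : IsAwaySurjective x N := by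
  intro z k
  obtain ⟨y, rfl⟩ := hf z
  obtain ⟨y', l, h⟩ := h y k
  exact ⟨f y', l, by simpa using congrArg f h⟩

/-- An element of `Γ_{I+(x)}(P)` lifts to some `j ∈ Γ_I(E)`, and `x ^ k • j` comes from `Γ_I(L)`
for large `k`; dividing it by `x ^ k` there corrects `j` to an `x`-power torsion element. -/
lemma IsShortExact.powTorsion_sup_le_map {R : Type*} [CommRing R] {I : Ideal R} {x : R}
    {L E P : Type*} [AddCommGroup L] [Module R L] [AddCommGroup E] [Module R E] [AddCommGroup P]
    [Module R P] {f : L →ₗ[R] E} {g : E →ₗ[R] P} (h : IsShortExact f g)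
    (hL : IsAwaySurjective x (powTorsion I L))
    (hg : powTorsion I P ≤ (powTorsion I E).map g) :
    powTorsion (I ⊔ Ideal.span {x}) P ≤ (powTorsion (I ⊔ Ideal.span {x}) E).map g := by
  intro z hz
  obtain ⟨hzI, k, hk⟩ := mem_powTorsion_sup_span_singleton_iff.1 hz
  obtain ⟨j, hj, rfl⟩ := hg hzI
  obtain ⟨n, hn⟩ : ∃ n, f n = x ^ k • j := (h.exact _).1 (by rw [map_smul, hk])
  have hnI : n ∈ powTorsion I L :=
    mem_powTorsion_of_map h.injective (hn ▸ Submodule.smul_mem _ _ hj)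
  obtain ⟨n', l, hl⟩ := hL ⟨n, hnI⟩ k
  have hjn : x ^ (l + k) • (j - f n') = 0 := by
    rw [pow_add, mul_smul, smul_sub (x ^ k), ← hn, ← map_smul, ← map_sub, ← map_smul]
    exact (congrArg f (congrArg Subtype.val hl)).trans (map_zero f)
  exact ⟨j - f n', mem_powTorsion_sup_span_singleton_iff.2
    ⟨Submodule.sub_mem _ hj (map_mem_powTorsion f n'.2), l + k, hjn⟩,
    by rw [map_sub, h.exact.apply_apply_eq_zero, sub_zero]⟩

end AwaySurjective

section Injective

variable {R : Type u} [CommRing R] {E : Type u} [AddCommGroup E] [Module R E]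
  [Module.Injective R E]

lemma exists_comp_eq_of_ker_le {M N : Type u} [AddCommGroup M] [Module R M] [AddCommGroup N]
    [Module R N] {f : M →ₗ[R] N} {g : M →ₗ[R] E} (h : LinearMap.ker f ≤ LinearMap.ker g) :
    ∃ e : N →ₗ[R] E, e ∘ₗ f = g := by
  obtain ⟨e, he⟩ := Module.Injective.extension_property R E _ _
    ((LinearMap.ker f).liftQ f le_rfl)
    (LinearMap.ker_eq_bot.1 (Submodule.ker_liftQ_eq_bot _ _ _ le_rfl))
    ((LinearMap.ker f).liftQ g h)
  refine ⟨e, ?_⟩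
  rw [← Submodule.liftQ_mkQ _ f le_rfl, ← LinearMap.comp_assoc, he, Submodule.liftQ_mkQ]

lemma isAwaySurjective_of_injective [IsNoetherianRing R] (x : R) : IsAwaySurjective x E := by
  intro y k
  obtain ⟨l, hl⟩ := monotone_stabilizes_iff_noetherian.2 (inferInstance : IsNoetherian R R)
    (algebraMap R (Module.End R R) x).iterateKer
  have mul_eq_zero (r : R) (hr : x ^ (k + l) * r = 0) : x ^ l * r = 0 := by
    have := SetLike.ext_iff.1 (hl (k + l) (by omega)) r
    simpa [LinearMap.iterateKer, ← map_pow, hr] using this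
  obtain ⟨e, he⟩ := exists_comp_eq_of_ker_le (E := E)
    (f := LinearMap.toSpanSingleton R R (x ^ (k + l)))
    (g := LinearMap.toSpanSingleton R E (x ^ l • y)) fun r hr => by
      rw [LinearMap.mem_ker, LinearMap.toSpanSingleton_apply, smul_eq_mul, mul_comm] at hr
      rw [LinearMap.mem_ker, LinearMap.toSpanSingleton_apply, ← mul_smul, mul_comm,
        mul_eq_zero r hr, zero_smul]
  refine ⟨e 1, l, ?_⟩
  have h1 := LinearMap.congr_fun he 1
  rw [LinearMap.comp_apply, LinearMap.toSpanSingleton_apply, LinearMap.toSpanSingleton_apply,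
    one_smul, one_smul, ← mul_one (x ^ (k + l)), ← smul_eq_mul, map_smul] at h1
  rw [smul_sub, ← h1, ← mul_smul, ← pow_add, add_comm l k, sub_self]

lemma exists_pow_smul_eq_zero_of_powTorsion_eq_top {R : Type*} [CommRing R] {I : Ideal R}
    {M : Type*} [AddCommGroup M] [Module R M] [Module.Finite R M] (h : powTorsion I M = ⊤) :
    ∃ k : ℕ, ∀ a ∈ I ^ k, ∀ y : M, a • y = 0 := by
  obtain ⟨s, hs⟩ := Module.Finite.fg_top (R := R) (M := M)
  choose k hk using fun y : M => show y ∈ powTorsion I M from h ▸ Submodule.mem_top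
  refine ⟨s.sup k, fun a ha y => ?_⟩
  have hs_le : Submodule.span R (s : Set M) ≤ LinearMap.ker (LinearMap.lsmul R M a) :=
    Submodule.span_le.2 fun z hz => hk z a (Ideal.pow_le_pow_right (Finset.le_sup hz) ha)
  exact hs_le (hs ▸ Submodule.mem_top)

lemma exists_pow_inf_le_ker [IsNoetherianRing R] (I J : Ideal R) {M : Type*} [AddCommGroup M]
    [Module R M] (φ : J →ₗ[R] powTorsion I M) :
    ∃ n : ℕ, LinearMap.ker ((I ^ n).mkQ ∘ₗ J.subtype) ≤ LinearMap.ker φ := by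
  obtain ⟨m, hm⟩ : ∃ m : ℕ, ∀ a ∈ I ^ m, ∀ y : LinearMap.range φ, a • y = 0 :=
    exists_pow_smul_eq_zero_of_powTorsion_eq_top <| eq_top_iff.2 fun y _ =>
      mem_powTorsion_of_map (f := (powTorsion I M).subtype ∘ₗ (LinearMap.range φ).subtype)
        (Subtype.val_injective.comp Subtype.val_injective) y.1.2
  -- Artin–Rees
  obtain ⟨k, hk⟩ := I.exists_pow_inf_eq_pow_smul (J : Submodule R R)
  refine ⟨m + k, fun r hr => ?_⟩
  have hr_mem : (r : R) ∈ I ^ m • J := by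
    have h : (r : R) ∈ I ^ (m + k) • (⊤ : Submodule R R) ⊓ J :=
      ⟨by simpa [Ideal.Quotient.eq_zero_iff_mem] using hr, r.2⟩
    rw [hk _ (Nat.le_add_left k m), Nat.add_sub_cancel] at h
    exact Submodule.smul_mono le_rfl inf_le_right h
  have smul_le : I ^ m • J ≤ (LinearMap.ker φ).map J.subtype :=
    Submodule.smul_le.2 fun a ha c hc => ⟨a • ⟨c, hc⟩, by
      rw [SetLike.mem_coe, LinearMap.mem_ker, map_smul]
      exact congrArg Subtype.val (hm a ha ⟨φ ⟨c, hc⟩, _, rfl⟩), rfl⟩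
  obtain ⟨r', hr', hrr'⟩ := smul_le hr_mem
  exact Subtype.val_injective hrr' ▸ hr'

instance injective_powTorsion [IsNoetherianRing R] (I : Ideal R) :
    Module.Injective R (powTorsion I E) := by
  refine Module.Baer.injective fun J φ => ?_
  obtain ⟨n, hn⟩ := exists_pow_inf_le_ker I J φ
  obtain ⟨e, he⟩ := exists_comp_eq_of_ker_le (E := E) (g := (powTorsion I E).subtype ∘ₗ φ)
    (hn.trans (LinearMap.ker_le_ker_comp φ _))
  have e_mem (r : R) : e (Submodule.Quotient.mk r) ∈ powTorsion I E := by
    refine ⟨n, fun a ha => ?_⟩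
    rw [← map_smul, ← Submodule.Quotient.mk_smul, (Submodule.Quotient.mk_eq_zero _).2
      (show a • r ∈ I ^ n from Ideal.mul_mem_right r _ ha), map_zero]
  refine ⟨(e ∘ₗ (I ^ n).mkQ).codRestrict _ e_mem, fun r hr => Subtype.ext ?_⟩
  exact LinearMap.congr_fun he ⟨r, hr⟩

end Injective

/-! ### Degree zero and dimension shifting -/

namespace ExtColim

open CategoryTheory.Abelian

variable {R : Type u} [CommRing R] {I : Ideal R} {i : ℕ} {M N L : Type u} [AddCommGroup M]
  [Module R M] [AddCommGroup N] [Module R N] [AddCommGroup L] [Module R L]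

lemma powTorsion_eq_top : powTorsion I (ExtColim I i M) = ⊤ := by
  refine eq_top_iff.2 fun z _ => ?_
  obtain ⟨k, x, rfl⟩ := exists_of z
  refine ⟨k, fun a ha => ?_⟩
  have h : a • 𝟙 (ModuleCat.of R (R ⧸ I ^ k)) = 0 := by
    ext
    exact Ideal.Quotient.eq_zero_iff_mem.2 (by simpa using ha)
  have hx : a • x = 0 := by
    rw [← Ext.mk₀_id_comp x, ← Ext.smul_comp, ← Ext.mk₀_smul, h, Ext.mk₀_zero, Ext.zero_comp]
  rw [← LinearMap.map_smul, hx, map_zero]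

variable (I M) in
/-- Evaluation at `1` of homomorphisms `R ⧸ I ^ k → M`; it identifies `H^0_I(M)` with `Γ_I(M)`. -/
noncomputable def eval : ExtColim I 0 M →ₗ[R] M :=
  Module.DirectLimit.lift R ℕ _ _
    (fun _ => LinearMap.applyₗ (Submodule.Quotient.mk 1) ∘ₗ
      (ModuleCat.homLinearEquiv (S := R)).toLinearMap ∘ₗ (Ext.linearEquiv₀ (R := R)).toLinearMap)
    (fun k l h x => by
      obtain ⟨φ, rfl⟩ := (Ext.linearEquiv₀ (R := R)).symm.surjective x
      have res_apply : res I 0 M k l h ((Ext.linearEquiv₀ (R := R)).symm φ) =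
          (Ext.linearEquiv₀ (R := R)).symm (proj I h ≫ φ) :=
        Ext.mk₀_comp_mk₀ _ _
      simp only [res_apply, LinearMap.comp_apply, LinearEquiv.coe_coe,
        LinearEquiv.apply_symm_apply]
      rfl)

lemma eval_of_mk₀ (k : ℕ) (φ : ModuleCat.of R (R ⧸ I ^ k) ⟶ ModuleCat.of R M) :
    eval I M (of k (Ext.mk₀ φ)) = φ.hom (Submodule.Quotient.mk 1) :=
  (Module.DirectLimit.lift_of ..).trans <| congrArg
    (fun ψ : ModuleCat.of R (R ⧸ I ^ k) ⟶ ModuleCat.of R M => ψ.hom (Submodule.Quotient.mk 1))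
    ((Ext.linearEquiv₀ (R := R)).apply_symm_apply φ)

lemma exists_of_mk₀ (z : ExtColim I 0 M) :
    ∃ (k : ℕ) (φ : ModuleCat.of R (R ⧸ I ^ k) ⟶ ModuleCat.of R M), of k (Ext.mk₀ φ) = z := by
  obtain ⟨k, x, rfl⟩ := exists_of z
  exact ⟨k, Ext.homEquiv₀ x, by rw [Ext.mk₀_homEquiv₀_apply]⟩

lemma eval_map (f : M →ₗ[R] N) (z : ExtColim I 0 M) :
    eval I N (map I 0 f z) = f (eval I M z) := by
  obtain ⟨k, φ, rfl⟩ := exists_of_mk₀ z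
  rw [map_of, Ext.mk₀_comp_mk₀, eval_of_mk₀, eval_of_mk₀]
  rfl

lemma eval_injective : Function.Injective (eval I M) := by
  rw [injective_iff_map_eq_zero]
  intro z hz
  obtain ⟨k, φ, rfl⟩ := exists_of_mk₀ z
  have hφ : φ = 0 := by
    ext
    exact (eval_of_mk₀ k φ).symm.trans hz
  rw [hφ, Ext.mk₀_zero, map_zero]

lemma range_eval : LinearMap.range (eval I M) = powTorsion I M := by
  refine le_antisymm ?_ ?_
  · rintro _ ⟨z, rfl⟩
    exact map_mem_powTorsion _ ((powTorsion_eq_top (I := I) (M := M)).ge Submodule.mem_top)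
  · rintro x ⟨k, hk⟩
    refine ⟨of k (Ext.mk₀ (ModuleCat.ofHom ((I ^ k).liftQ (LinearMap.toSpanSingleton R M x)
      (fun a ha => by simpa using hk a ha)))), ?_⟩
    rw [eval_of_mk₀]
    exact one_smul R x

lemma subsingleton_of_injective [Module.Injective R M] : Subsingleton (ExtColim I (i + 1) M) :=
  have : Injective (ModuleCat.of R M) := Module.injective_object_of_injective_module R M
  subsingleton_of_forall_exists fun k =>
    ⟨k, le_rfl, subsingleton_of_forall_eq 0 fun x => Ext.eq_zero_of_injective x⟩

section ShortExact

variable {f : M →ₗ[R] N} {g : N →ₗ[R] L} (h : IsShortExact f g)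

include h

lemma subsingleton_right (h₁ : Subsingleton (ExtColim I i N))
    (h₂ : Subsingleton (ExtColim I (i + 1) M)) : Subsingleton (ExtColim I i L) :=
  subsingleton_of_forall_eq 0 fun z => by
    obtain ⟨y, rfl⟩ := (exact_map_δ h z).1 (Subsingleton.elim _ _)
    rw [Subsingleton.elim y 0, map_zero]

lemma subsingleton_left (h₁ : Subsingleton (ExtColim I i L))
    (h₂ : Subsingleton (ExtColim I (i + 1) N)) : Subsingleton (ExtColim I (i + 1) M) :=
  subsingleton_of_forall_eq 0 fun z => by
    obtain ⟨y, rfl⟩ := (exact_δ_map h z).1 (Subsingleton.elim _ _)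
    rw [Subsingleton.elim y 0, map_zero]

lemma map_surjective_of_subsingleton (h₁ : Subsingleton (ExtColim I (i + 1) M)) :
    Function.Surjective (map I i g) := fun z =>
  (exact_map_δ h z).1 (h₁.elim _ _)

lemma subsingleton_succ_succ_iff [Module.Injective R N] :
    Subsingleton (ExtColim I (i + 2) M) ↔ Subsingleton (ExtColim I (i + 1) L) :=
  ⟨fun h₁ => subsingleton_right h subsingleton_of_injective h₁,
    fun h₁ => subsingleton_left h h₁ subsingleton_of_injective⟩

lemma subsingleton_one_iff [Module.Injective R N] :
    Subsingleton (ExtColim I 1 M) ↔ powTorsion I L ≤ (powTorsion I N).map g := by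
  have map_surjective_iff :
      Function.Surjective (map I 0 g) ↔ powTorsion I L ≤ (powTorsion I N).map g := by
    have eval_comp : eval I L ∘ₗ map I 0 g = g ∘ₗ eval I N := LinearMap.ext (eval_map g)
    rw [← range_eval, ← range_eval, ← LinearMap.range_comp, ← eval_comp, LinearMap.range_comp,
      LinearMap.range_eq_map, Submodule.map_le_map_iff_of_injective eval_injective,
      top_le_iff, LinearMap.range_eq_top]
  rw [← map_surjective_iff]
  refine ⟨map_surjective_of_subsingleton h, fun hg => subsingleton_of_forall_eq 0 fun z => ?_⟩
  have := subsingleton_of_injective (I := I) (i := 0) (M := N)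
  obtain ⟨w, rfl⟩ := (exact_δ_map h z).1 (Subsingleton.elim _ _)
  exact (exact_map_δ h w).2 (hg w)

end ShortExact

end ExtColim

/-! ### Vanishing in high degrees -/

/-- `H^i_I(M) = 0` for all `i > c`. -/
def ExtColim.VanishesAbove {R : Type u} [CommRing R] (I : Ideal R) (M : Type u) [AddCommGroup M]
    [Module R M] (c : ℕ) : Prop :=
  ∀ i, c < i → Subsingleton (ExtColim I i M)

namespace ExtColim

namespace VanishesAbove

variable {R : Type u} [CommRing R] {I : Ideal R} {M N : Type u} [AddCommGroup M] [Module R M]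
  [AddCommGroup N] [Module R N] {c d : ℕ}

lemma mono (h : VanishesAbove I M c) (hcd : c ≤ d) : VanishesAbove I M d :=
  fun i hi => h i (hcd.trans_lt hi)

lemma of_linearEquiv (e : M ≃ₗ[R] N) (h : VanishesAbove I M c) : VanishesAbove I N c :=
  fun i hi => have := h i hi
    (map_surjective_of_linearEquiv e).subsingleton

end VanishesAbove

section

variable {R : Type u} [CommRing R] [IsNoetherianRing R] {I J : Ideal R}
  {M : Type u} [AddCommGroup M] [Module R M]

lemma subsingleton_succ_iff_of_radical_eq (h : I.radical = J.radical) {i : ℕ} :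
    Subsingleton (ExtColim I (i + 1) M) ↔ Subsingleton (ExtColim J (i + 1) M) := by
  induction i generalizing M with
  | zero =>
    obtain ⟨E, L, f, g, _, hfg⟩ := exists_injective_presentation R M
    rw [subsingleton_one_iff hfg, subsingleton_one_iff hfg, powTorsion_congr_radical h,
      powTorsion_congr_radical h]
  | succ i ih =>
    obtain ⟨E, L, f, g, _, hfg⟩ := exists_injective_presentation R M
    rw [subsingleton_succ_succ_iff hfg, subsingleton_succ_succ_iff hfg]
    exact ih

lemma exists_isShortExact_powTorsion_eq_top (hM : powTorsion I M = ⊤) :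
    ∃ (E L : ModuleCat.{u} R) (f : M →ₗ[R] E) (g : E →ₗ[R] L), Module.Injective R E ∧
      powTorsion I E = ⊤ ∧ powTorsion I L = ⊤ ∧ IsShortExact f g := by
  obtain ⟨E, _, f, _, _, hf⟩ := exists_injective_presentation R M
  have f_mem (y : M) : f y ∈ powTorsion I E := map_mem_powTorsion f (hM ▸ Submodule.mem_top)
  have hfg := isShortExact_mkQ_range
    ((LinearMap.injective_codRestrict_iff (hf := f_mem)).2 hf.injective)
  exact ⟨.of R _, .of R _, _, _, injective_powTorsion I, powTorsion_powTorsion,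
    powTorsion_eq_top_of_surjective hfg.surjective powTorsion_powTorsion, hfg⟩

lemma subsingleton_succ_of_powTorsion_eq_top (hM : powTorsion I M = ⊤) (i : ℕ) :
    Subsingleton (ExtColim I (i + 1) M) := by
  induction i generalizing M with
  | zero =>
    obtain ⟨E, L, f, g, _, hE, -, hfg⟩ := exists_isShortExact_powTorsion_eq_top hM
    rw [subsingleton_one_iff hfg, hE, Submodule.map_top, LinearMap.range_eq_top.2 hfg.surjective]
    exact le_top
  | succ i ih =>
    obtain ⟨E, L, f, g, _, -, hL, hfg⟩ := exists_isShortExact_powTorsion_eq_top hM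
    rw [subsingleton_succ_succ_iff hfg]
    exact ih hL

lemma subsingleton_add_two_sup_span_singleton (x : R) {i : ℕ}
    (h₁ : Subsingleton (ExtColim I (i + 1) M)) (h₂ : Subsingleton (ExtColim I (i + 2) M)) :
    Subsingleton (ExtColim (I ⊔ Ideal.span {x}) (i + 2) M) := by
  induction i generalizing M with
  | zero =>
    obtain ⟨E, L, f, g, _, hfg⟩ := exists_injective_presentation R M
    obtain ⟨E', P, f', g', _, hfg'⟩ := exists_injective_presentation R L
    rw [subsingleton_succ_succ_iff hfg] at h₂ ⊢
    rw [subsingleton_one_iff hfg] at h₁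
    rw [subsingleton_one_iff hfg'] at h₂ ⊢
    refine hfg'.powTorsion_sup_le_map
      ((isAwaySurjective_of_injective x).of_surjective
        (f := g.restrict fun _ => map_mem_powTorsion (I := I) g) fun z => ?_) h₂
    obtain ⟨y, hy, hyz⟩ := h₁ z.2
    exact ⟨⟨y, hy⟩, Subtype.ext hyz⟩
  | succ i ih =>
    obtain ⟨E, L, f, g, _, hfg⟩ := exists_injective_presentation R M
    rw [subsingleton_succ_succ_iff hfg] at h₁ h₂ ⊢
    exact ih h₁ h₂

namespace VanishesAbove

lemma of_radical_eq (hIJ : I.radical = J.radical) {c : ℕ} (h : VanishesAbove I M c) :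
    VanishesAbove J M c := fun i hi => by
  obtain ⟨i, rfl⟩ := Nat.exists_eq_add_one_of_ne_zero (Nat.ne_zero_of_lt hi)
  exact (subsingleton_succ_iff_of_radical_eq hIJ).1 (h _ hi)

lemma of_powTorsion_eq_top (hM : powTorsion I M = ⊤) : VanishesAbove I M 0 := fun i hi => by
  obtain ⟨i, rfl⟩ := Nat.exists_eq_add_one_of_ne_zero hi.ne'
  exact subsingleton_succ_of_powTorsion_eq_top hM i

lemma sup_span_singleton {c : ℕ} (h : VanishesAbove I M c) (x : R) :
    VanishesAbove (I ⊔ Ideal.span {x}) M (c + 1) := fun i hi => by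
  obtain ⟨i, rfl⟩ := Nat.exists_eq_add_of_le' (show 2 ≤ i by omega)
  exact subsingleton_add_two_sup_span_singleton x (h _ (by omega)) (h _ (by omega))

lemma sup_span {c : ℕ} (h : VanishesAbove I M c) (s : Finset R) :
    VanishesAbove (I ⊔ Ideal.span s) M (c + s.card) := by
  classical
  induction s using Finset.induction with
  | empty => simpa using h
  | insert x s hx ih =>
    rw [Finset.card_insert_of_notMem hx, Finset.coe_insert, Ideal.span_insert,
      sup_comm (Ideal.span {x}), ← sup_assoc, ← add_assoc]
    exact ih.sup_span_singleton x

end VanishesAbove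

lemma exists_forall_vanishesAbove (I : Ideal R) :
    ∃ d : ℕ, ∀ (M : Type u) [AddCommGroup M] [Module R M], VanishesAbove I M d := by
  obtain ⟨s, rfl⟩ := IsNoetherian.noetherian I
  refine ⟨0 + s.card, fun M _ _ => ?_⟩
  have h : VanishesAbove (⊥ : Ideal R) M 0 :=
    .of_powTorsion_eq_top (powTorsion_eq_top_of_le_annihilator bot_le)
  simpa only [bot_sup_eq] using h.sup_span s

end

end ExtColim

section SystemOfParameters

variable {R : Type*} [CommRing R] [IsLocalRing R]

local notation "𝔪" => IsLocalRing.maximalIdeal R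

lemma radical_eq_maximalIdeal_of_mem_minimalPrimes {J : Ideal R} (h : 𝔪 ∈ J.minimalPrimes) :
    J.radical = 𝔪 := by
  refine le_antisymm ((IsLocalRing.maximalIdeal.isMaximal R).isPrime.radical_le_iff.2 h.1.2) ?_
  rw [Ideal.radical_eq_sInf]
  exact le_sInf fun q hq => h.2 ⟨hq.2, hq.1⟩ (IsLocalRing.le_maximalIdeal hq.2.ne_top)

lemma exists_finset_radical_sup_span_eq_maximalIdeal [IsNoetherianRing R] {I : Ideal R}
    (hI : I ≠ ⊤) :
    ∃ s : Finset R, (s.card : WithBot ℕ∞) ≤ ringKrullDim (R ⧸ I) ∧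
      (I ⊔ Ideal.span s).radical = 𝔪 := by
  classical
  have : Nontrivial (R ⧸ I) := Ideal.Quotient.nontrivial_iff.2 hI
  have mk_surjective : Function.Surjective (Ideal.Quotient.mk I) := Ideal.Quotient.mk_surjective
  have : IsLocalRing (R ⧸ I) := IsLocalRing.of_surjective' _ mk_surjective
  have := IsLocalHom.of_surjective _ mk_surjective
  obtain ⟨t, ht, ht_card⟩ := Ideal.exists_finset_card_eq_height_of_isNoetherianRing
    (IsLocalRing.maximalIdeal (R ⧸ I))
  obtain ⟨s, -, mk_injOn, rfl⟩ :=
    Finset.exists_subset_injOn_image_eq_of_surjOn Set.univ t fun y _ => by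
      simpa using mk_surjective y
  refine ⟨s, ?_, ?_⟩
  · rw [← IsLocalRing.maximalIdeal_height_eq_ringKrullDim, ← ht_card,
      Finset.card_image_of_injOn mk_injOn]
    rfl
  · have hs : Ideal.span (s.image (Ideal.Quotient.mk I) : Set (R ⧸ I)) =
        (Ideal.span (s : Set R)).map (Ideal.Quotient.mk I) := by
      rw [Ideal.map_span, Finset.coe_image]
    have comap_span : (Ideal.span (s.image (Ideal.Quotient.mk I) : Set (R ⧸ I))).comap
        (Ideal.Quotient.mk I) = I ⊔ Ideal.span (s : Set R) := by
      rw [hs, Ideal.comap_map_of_surjective _ mk_surjective, ← RingHom.ker_eq_comap_bot,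
        Ideal.mk_ker, sup_comm]
    rw [← comap_span, ← Ideal.comap_radical, radical_eq_maximalIdeal_of_mem_minimalPrimes ht,
      IsLocalRing.maximalIdeal_comap]

end SystemOfParameters

/-! ### Cohomology of cyclic modules in the top degree -/

section CyclicModules

variable {R : Type*} [CommRing R]

lemma exists_surjective_of_le_annihilator {b : Ideal R} {M : Type*} [AddCommGroup M] [Module R M]
    [Module.Finite R M] (hM : b ≤ Module.annihilator R M) :
    ∃ (n : ℕ) (f : (Fin n → R ⧸ b) →ₗ[R] M), Function.Surjective f := by
  have hM' : Module.IsTorsionBySet R M b := fun y a => Module.mem_annihilator.1 (hM a.2) y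
  let _ : Module (R ⧸ b) M := hM'.module
  have : IsScalarTower R (R ⧸ b) M := hM'.isScalarTower
  have : Module.Finite (R ⧸ b) M := .of_restrictScalars_finite R (R ⧸ b) M
  obtain ⟨n, f, hf⟩ := Module.Finite.exists_fin' (R ⧸ b) M
  exact ⟨n, f.restrictScalars R, hf⟩

lemma le_annihilator_pi_quotient (b : Ideal R) (n : ℕ) :
    b ≤ Module.annihilator R (Fin n → R ⧸ b) := by
  rw [Module.annihilator_pi]
  exact le_iInf fun _ => Ideal.annihilator_quotient.ge

lemma le_annihilator_submodule {b : Ideal R} {M : Type*} [AddCommGroup M] [Module R M]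
    (hM : b ≤ Module.annihilator R M) (N : Submodule R M) : b ≤ Module.annihilator R N :=
  hM.trans (LinearMap.annihilator_le_of_injective _ N.injective_subtype)

lemma exists_sum_smul_proj_eq {p q : Ideal R} (hpq : p ≤ q) {n : ℕ}
    (g : (Fin n → R ⧸ p) →ₗ[R] R ⧸ p) (hg : Submodule.factor hpq ∘ₗ g = 0) :
    ∃ a : Fin n → R, (∀ k, a k ∈ q) ∧ ∑ k, a k • LinearMap.proj k = g := by
  choose a ha using fun k => Submodule.Quotient.mk_surjective p (g (Pi.single k 1))
  refine ⟨a, fun k => ?_, ?_⟩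
  · have factor_mk : Submodule.factor hpq (Submodule.Quotient.mk (a k)) = 0 := by
      rw [ha]
      exact LinearMap.congr_fun hg _
    exact (Submodule.Quotient.mk_eq_zero q).1 factor_mk
  · ext k
    refine Eq.trans ?_ (ha k)
    have smul_mk_one : a k • (Submodule.Quotient.mk 1 : R ⧸ p) = Submodule.Quotient.mk (a k) := by
      rw [← Submodule.Quotient.mk_smul, smul_eq_mul, mul_one]
    simpa [Pi.single_apply] using smul_mk_one

end CyclicModules

namespace ExtColim

variable {R : Type u} [CommRing R] {I : Ideal R} {i : ℕ} {M : Type u} [AddCommGroup M] [Module R M]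

lemma annihilator_le_annihilator :
    Module.annihilator R M ≤ Module.annihilator R (ExtColim I i M) := fun a ha =>
  Module.mem_annihilator.2 fun z => by
    have smul_id : a • (LinearMap.id : M →ₗ[R] M) = (0 : R) • LinearMap.id := by
      ext y
      simp [Module.mem_annihilator.1 ha y]
    rw [← map_smul_id, smul_id, map_smul_id, zero_smul]

lemma subsingleton_pi {n : ℕ} [Subsingleton (ExtColim I i M)] :
    Subsingleton (ExtColim I i (Fin n → M)) := by
  have sum_single_comp_proj : ∑ a, (1 : R) • (LinearMap.single R (fun _ : Fin n => M) a ∘ₗ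
      LinearMap.proj a) = LinearMap.id :=
    LinearMap.ext fun y => by simpa using Finset.univ_sum_single y
  refine subsingleton_of_forall_eq 0 fun z => ?_
  rw [← LinearMap.id_apply (R := R) z, ← map_id, ← sum_single_comp_proj, map_sum_smul,
    LinearMap.sum_apply]
  refine Finset.sum_eq_zero fun a _ => ?_
  rw [map_comp, one_smul, LinearMap.comp_apply,
    Subsingleton.elim (map I i (LinearMap.proj a) z) 0, map_zero]

/-- Finite modules killed by `b` are covered by powers of `R ⧸ b`, with kernels of the same kind;
so the claim follows by descending induction on the degree. -/
lemma VanishesAbove.of_le_annihilator [IsNoetherianRing R] {b : Ideal R} {c : ℕ}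
    (h : VanishesAbove I (R ⧸ b) c) [Module.Finite R M] (hM : b ≤ Module.annihilator R M) :
    VanishesAbove I M c := by
  obtain ⟨d, hd⟩ := exists_forall_vanishesAbove I
  intro i hi
  obtain ⟨t, ht⟩ : ∃ t, d < i + t := ⟨d + 1, by omega⟩
  induction t generalizing i M with
  | zero => exact hd M i ht
  | succ t ih =>
    obtain ⟨n, f, hf⟩ := exists_surjective_of_le_annihilator hM
    have := h i hi
    refine subsingleton_right (isShortExact_subtype_ker hf) subsingleton_pi
      (ih ?_ (i + 1) (by omega) (by omega))
    exact le_annihilator_submodule (le_annihilator_pi_quotient b n) _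

section TopDegree

variable [IsNoetherianRing R] {c : ℕ} {p q : Ideal R}

lemma VanishesAbove.ker_map_factor (h : VanishesAbove I (R ⧸ p) c) (hpq : p ≤ q) :
    LinearMap.ker (map I c (Submodule.factor hpq)) = q • ⊤ := by
  set f : R ⧸ p →ₗ[R] R ⧸ q := Submodule.factor hpq
  have hf := isShortExact_subtype_ker (Submodule.factor_surjective hpq)
  refine le_antisymm (fun z hz => ?_) (Submodule.smul_le.2 fun a ha z _ => ?_)
  · obtain ⟨n, g, hg⟩ := exists_surjective_of_le_annihilator
      (le_annihilator_submodule (Ideal.annihilator_quotient (I := p)).ge (LinearMap.ker f))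
    have map_g_surjective : Function.Surjective (map I c g) :=
      map_surjective_of_subsingleton (isShortExact_subtype_ker hg) <|
        h.of_le_annihilator (le_annihilator_submodule (le_annihilator_pi_quotient p n) _) _
          (Nat.lt_succ_self c)
    obtain ⟨a, ha, ha_sum⟩ := exists_sum_smul_proj_eq hpq ((LinearMap.ker f).subtype ∘ₗ g)
      (LinearMap.ext fun y => (g y).2)
    obtain ⟨w, rfl⟩ := (exact_map_map hf z).1 hz
    obtain ⟨v, rfl⟩ := map_g_surjective w
    rw [← LinearMap.comp_apply, ← map_comp, ← ha_sum, map_sum_smul, LinearMap.sum_apply]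
    exact Submodule.sum_mem _ fun k _ => Submodule.smul_mem_smul (ha k) Submodule.mem_top
  · rw [LinearMap.mem_ker, map_smul]
    exact Module.mem_annihilator.1
      (annihilator_le_annihilator ((Ideal.annihilator_quotient (I := q)).ge ha)) _

lemma VanishesAbove.subsingleton_quotient_iff (h : VanishesAbove I (R ⧸ p) c) (hpq : p ≤ q) :
    Subsingleton (ExtColim I c (R ⧸ q)) ↔
      q • (⊤ : Submodule R (ExtColim I c (R ⧸ p))) = ⊤ := by
  have map_surjective : Function.Surjective (map I c (Submodule.factor hpq)) := by
    refine map_surjective_of_subsingleton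
      (isShortExact_subtype_ker (Submodule.factor_surjective hpq)) ?_
    exact h.of_le_annihilator
      (le_annihilator_submodule (Ideal.annihilator_quotient (I := p)).ge _) _ (Nat.lt_succ_self c)
  rw [← h.ker_map_factor hpq, LinearMap.ker_eq_top]
  refine ⟨fun _ => Subsingleton.elim _ _, fun h0 => subsingleton_of_forall_eq 0 fun z => ?_⟩
  obtain ⟨w, rfl⟩ := map_surjective z
  rw [h0, LinearMap.zero_apply]

end TopDegree

end ExtColim

/-! ### Artinianness -/

lemma exists_forall_eq_of_antitone_of_antitone {α : Type*} [PartialOrder α] [WellFoundedLT α]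
    {f : ℕ → ℕ → α} (hf : ∀ k, Antitone (f k)) (hf' : ∀ n, Antitone (f · n)) :
    ∃ n, ∀ m, n ≤ m → ∀ k, f k n = f k m := by
  obtain ⟨d, hd⟩ := WellFoundedLT.antitone_chain_condition
    (fun k l h => (hf l h).trans (hf' k h) : Antitone fun n => f n n)
  have eq_diag {k n : ℕ} (hk : d ≤ k) (hn : d ≤ n) : f k n = f d d := by
    refine le_antisymm ((hf k hn).trans (hf' d hk)) ?_
    rw [hd (k + n) (by omega)]
    exact (hf (k + n) (by omega)).trans (hf' n (by omega))
  choose s hs using fun k => WellFoundedLT.antitone_chain_condition (hf k)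
  refine ⟨d ⊔ (Finset.range d).sup s, fun m hm k => ?_⟩
  rcases lt_or_ge k d with hk | hk
  · have le_sup : s k ≤ d ⊔ (Finset.range d).sup s :=
      (Finset.le_sup (Finset.mem_range.2 hk)).trans le_sup_right
    exact (hs k _ le_sup).symm.trans (hs k _ (le_sup.trans hm))
  · rw [eq_diag hk le_sup_left, eq_diag hk (le_sup_left.trans hm)]

section Melkersson

variable {R H : Type*} [CommRing R] [AddCommGroup H] [Module R H] (x : R)

/-- The submodule `(0 :_H x) ∩ x ^ k N` of `(0 :_H x)`. -/
def torsionByInfPowSMul (N : Submodule R H) (k : ℕ) : Submodule R (Submodule.torsionBy R H x) :=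
  (N.map (LinearMap.lsmul R H (x ^ k))).comap (Submodule.torsionBy R H x).subtype

variable {x}

lemma torsionByInfPowSMul_antitone (N : Submodule R H) : Antitone (torsionByInfPowSMul x N) := by
  rintro k _ h y ⟨z, hz, hzy⟩
  obtain ⟨t, rfl⟩ := Nat.exists_eq_add_of_le h
  exact ⟨x ^ t • z, N.smul_mem _ hz, by rwa [LinearMap.lsmul_apply, ← mul_smul, ← pow_add]⟩

lemma torsionByInfPowSMul_mono {N N' : Submodule R H} (h : N ≤ N') (k : ℕ) :
    torsionByInfPowSMul x N k ≤ torsionByInfPowSMul x N' k :=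
  Submodule.comap_mono (Submodule.map_mono h)

lemma eq_of_forall_torsionByInfPowSMul_eq (hx : ∀ y : H, ∃ k : ℕ, x ^ k • y = 0)
    {N N' : Submodule R H} (hle : N ≤ N')
    (h : ∀ k, torsionByInfPowSMul x N k = torsionByInfPowSMul x N' k) : N = N' := by
  refine le_antisymm hle fun y hy => ?_
  obtain ⟨k, hk⟩ := hx y
  induction k generalizing y with
  | zero => simp_all
  | succ k ih =>
    have pow_smul_mem : x ^ k • y ∈ Submodule.torsionBy R H x := by
      rwa [Submodule.mem_torsionBy_iff, ← mul_smul, ← pow_succ']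
    obtain ⟨z, hz, hzy⟩ : (⟨_, pow_smul_mem⟩ : Submodule.torsionBy R H x) ∈
        torsionByInfPowSMul x N k := h k ▸ ⟨y, hy, rfl⟩
    have sub_mem : y - z ∈ N := ih _ (N'.sub_mem hy (hle hz)) (by
      rw [smul_sub]
      exact sub_eq_zero.2 hzy.symm)
    exact (N.sub_mem_iff_left hz).1 sub_mem

/-- **Melkersson's criterion** for a principal ideal. -/
lemma isArtinian_of_isArtinian_torsionBy (hx : ∀ y : H, ∃ k : ℕ, x ^ k • y = 0)
    [IsArtinian R (Submodule.torsionBy R H x)] : IsArtinian R H := by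
  refine monotone_stabilizes_iff_artinian.1 fun N => ?_
  have N_antitone {k l : ℕ} (h : k ≤ l) : (N l).ofDual ≤ (N k).ofDual := N.monotone h
  obtain ⟨n, hn⟩ := exists_forall_eq_of_antitone_of_antitone
    (f := fun k n => torsionByInfPowSMul x (N n).ofDual k)
    (fun k _ _ h => torsionByInfPowSMul_mono (N_antitone h) k)
    (fun n => torsionByInfPowSMul_antitone (N n).ofDual)
  exact ⟨n, fun m hm =>
    (eq_of_forall_torsionByInfPowSMul_eq hx (N_antitone hm) fun k => (hn m hm k).symm).symm⟩

end Melkersson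

lemma exists_isSMulRegular_quotient {R : Type*} [CommRing R] [IsLocalRing R] {q : PrimeSpectrum R}
    (hq : q.asIdeal ≠ IsLocalRing.maximalIdeal R) :
    ∃ x ∈ IsLocalRing.maximalIdeal R, IsSMulRegular (R ⧸ q.asIdeal) x := by
  obtain ⟨x, hxm, hxq⟩ := SetLike.exists_of_lt
    (lt_of_le_of_ne (IsLocalRing.le_maximalIdeal q.2.ne_top) hq)
  exact ⟨x, hxm, (isSMulRegular_quotient_iff_mem_of_smul_mem _ _).2 fun y hy =>
    (q.2.mem_or_mem hy).resolve_left hxq⟩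

namespace ExtColim

section

variable {R : Type u} [CommRing R] {I : Ideal R} {i : ℕ} {M : Type u} [AddCommGroup M] [Module R M]

lemma isArtinian_of_forall_quotient_prime [IsNoetherianRing R]
    (h : ∀ q : PrimeSpectrum R, IsArtinian R (ExtColim I i (R ⧸ q.asIdeal)))
    (M : Type u) [AddCommGroup M] [Module R M] [hM : Module.Finite R M] :
    IsArtinian R (ExtColim I i M) := by
  induction hM using IsNoetherianRing.induction_on_isQuotientEquivQuotientPrime R with
  | subsingleton N =>
    have : Subsingleton (ExtColim I i N) := by
      rw [← Module.annihilator_eq_top_iff (R := R), eq_top_iff]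
      exact (Module.annihilator_eq_top_iff.2 inferInstance).ge.trans annihilator_le_annihilator
    infer_instance
  | quotient N q e =>
    have := h q
    exact isArtinian_of_surjective (ExtColim I i (R ⧸ q.asIdeal)) _
      (map_surjective_of_linearEquiv e.symm)
  | exact N₁ N₂ N₃ f g hf hg hfg h₁ h₃ =>
    exact isArtinian_of_range_eq_ker (map I i f) (map I i g)
      (exact_map_map ⟨hf, hfg, hg⟩).linearMap_ker_eq.symm

variable {x : R}

lemma exists_pow_smul_eq_zero (hxI : x ∈ I) (z : ExtColim I i M) : ∃ k : ℕ, x ^ k • z = 0 := by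
  obtain ⟨k, hk⟩ : z ∈ powTorsion I (ExtColim I i M) :=
    powTorsion_eq_top.ge Submodule.mem_top
  exact ⟨k, hk _ (Ideal.pow_mem_pow hxI k)⟩

lemma subsingleton_zero_of_isSMulRegular (hxI : x ∈ I) (hx : IsSMulRegular M x) :
    Subsingleton (ExtColim I 0 M) :=
  subsingleton_of_forall_eq 0 fun z => by
    obtain ⟨k, hk⟩ := exists_pow_smul_eq_zero hxI z
    refine eval_injective ((hx.pow k).right_eq_zero_of_smul ?_)
    rw [← map_smul, hk, map_zero]

lemma isArtinian_succ_of_isSMulRegular (hxI : x ∈ I) (hx : IsSMulRegular M x)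
    [IsArtinian R (ExtColim I i (M ⧸ LinearMap.range (x • (LinearMap.id : M →ₗ[R] M))))] :
    IsArtinian R (ExtColim I (i + 1) M) := by
  have h := isShortExact_mkQ_range (f := x • (LinearMap.id : M →ₗ[R] M)) hx
  have torsionBy_le : Submodule.torsionBy R (ExtColim I (i + 1) M) x ≤
      LinearMap.range (δ I i h) := fun z hz =>
    (exact_δ_map h z).1 ((map_smul_id x z).trans hz)
  have := isArtinian_of_le torsionBy_le
  exact isArtinian_of_isArtinian_torsionBy (exists_pow_smul_eq_zero hxI)

end

section LocalRing

variable {R : Type u} [CommRing R] [IsLocalRing R]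

local notation "𝔪" => IsLocalRing.maximalIdeal R

lemma subsingleton_zero_of_ne {q : PrimeSpectrum R} (hq : q.asIdeal ≠ 𝔪) :
    Subsingleton (ExtColim 𝔪 0 (R ⧸ q.asIdeal)) := by
  obtain ⟨x, hxm, hx⟩ := exists_isSMulRegular_quotient hq
  exact subsingleton_zero_of_isSMulRegular hxm hx

variable [IsNoetherianRing R]

lemma isArtinian_quotient_maximalIdeal (i : ℕ) : IsArtinian R (ExtColim 𝔪 i (R ⧸ 𝔪)) := by
  cases i with
  | zero =>
    have : IsSimpleModule R (R ⧸ 𝔪) :=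
      isSimpleModule_iff_isCoatom.2 (IsLocalRing.maximalIdeal.isMaximal R).out
    exact isArtinian_of_injective (eval 𝔪 (R ⧸ 𝔪)) eval_injective
  | succ i =>
    have := subsingleton_succ_of_powTorsion_eq_top (powTorsion_quotient (I := 𝔪)) i
    infer_instance

instance isArtinian (i : ℕ) (M : Type u) [AddCommGroup M] [Module R M] [Module.Finite R M] :
    IsArtinian R (ExtColim 𝔪 i M) := by
  induction i generalizing M with
  | zero =>
    refine isArtinian_of_forall_quotient_prime (fun q => ?_) M
    by_cases hq : q.asIdeal = 𝔪
    · rw [hq]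
      exact isArtinian_quotient_maximalIdeal 0
    have := subsingleton_zero_of_ne hq
    infer_instance
  | succ i ih =>
    refine isArtinian_of_forall_quotient_prime (fun q => ?_) M
    by_cases hq : q.asIdeal = 𝔪
    · rw [hq]
      exact isArtinian_quotient_maximalIdeal (i + 1)
    obtain ⟨x, hxm, hx⟩ := exists_isSMulRegular_quotient hq
    exact isArtinian_succ_of_isSMulRegular hxm hx

end LocalRing

end ExtColim

/-! ### Nonvanishing -/

section Coheight

variable {α : Type*} [PartialOrder α]

lemma exists_lt_lt_of_add_two_le_coheight {a : α} {n : ℕ} (ha : (n + 2 : ℕ) ≤ Order.coheight a) :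
    ∃ b c, a < b ∧ b < c ∧ n ≤ Order.coheight c := by
  obtain ⟨s, rfl, hs⟩ := Order.exists_series_of_le_coheight a ha
  refine ⟨s ⟨1, by omega⟩, s ⟨2, by omega⟩, s.strictMono (by simp [Fin.lt_def]),
    s.strictMono (by simp [Fin.lt_def]), ?_⟩
  simpa [Fin.rev, hs] using Order.rev_index_le_coheight s ⟨2, by omega⟩

lemma coheight_le_of_lt_of_coheight_le {a b : α} {n : ℕ} (hab : a < b)
    (ha : Order.coheight a ≤ (n + 1 : ℕ)) : Order.coheight b ≤ n := by
  have := (Order.coheight_add_one_le hab).trans ha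
  push_cast at this
  exact (ENat.add_le_add_iff_right ENat.one_ne_top).1 this

lemma coheight_le_of_ne_of_le_of_le {a b c : α} {n : ℕ} (hab : a ≠ b) (hac : a ≤ c) (hbc : b ≤ c)
    (ha : Order.coheight a ≤ (n + 1 : ℕ)) (hb : Order.coheight b ≤ (n + 1 : ℕ)) :
    Order.coheight c ≤ n := by
  rcases hac.eq_or_lt with rfl | hac
  · exact coheight_le_of_lt_of_coheight_le (lt_of_le_of_ne hbc hab.symm) hb
  · exact coheight_le_of_lt_of_coheight_le hac ha

end Coheight

section PrimeSpectrum

variable {R : Type*} [CommRing R]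

lemma ringKrullDim_quotient_le_of_coheight_le {a : Ideal R} {n : ℕ}
    (h : ∀ q : PrimeSpectrum R, a ≤ q.asIdeal → Order.coheight q ≤ n) :
    ringKrullDim (R ⧸ a) ≤ n := by
  rw [ringKrullDim_quotient, Order.krullDim_eq_iSup_coheight]
  refine iSup_le fun q => ?_
  have := Order.coheight_le_coheight_apply_of_strictMono
    (Subtype.val : PrimeSpectrum.zeroLocus (a : Set R) → PrimeSpectrum R) (fun _ _ h => h) q
  exact_mod_cast this.trans (h q.1 q.2)

lemma infinite_Ioo_of_lt_of_lt [IsNoetherianRing R] {p p₁ p₂ : PrimeSpectrum R}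
    (h₁ : p < p₁) (h₂ : p₁ < p₂) : (Set.Ioo p p₂).Infinite := by
  intro hfin
  have p₂_subset : (p₂.asIdeal : Set R) ⊆ ⋃ q ∈ (hfin.toFinset : Set (PrimeSpectrum R)),
      q.asIdeal := fun y hy => by
    obtain ⟨q, hyq, hq⟩ := PrimeSpectrum.exist_mem_one_of_mem_two h₁ h₂ hy
    exact Set.mem_iUnion₂.2 ⟨q, by simpa using hq, hyq⟩
  obtain ⟨q, hq, hle⟩ := (Ideal.subset_union_prime p p fun q _ _ _ => q.2).1 p₂_subset
  exact (hfin.mem_toFinset.1 hq).2.not_ge hle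

/-- Choose `F` with `(∏ i ∈ F, J i) • ⊤` minimal, and any `j ∈ S` outside `F`. -/
lemma exists_prod_sup_smul_top_ne_top {T : Type*} [AddCommGroup T] [Module R T] [IsArtinian R T]
    {ι : Type*} {S : Set ι} (hS : S.Infinite) (J : ι → Ideal R)
    (hJ : ∀ i ∈ S, J i • (⊤ : Submodule R T) ≠ ⊤) :
    ∃ F : Finset ι, ↑F ⊆ S ∧ ∃ j ∈ S, j ∉ F ∧
      ((∏ i ∈ F, J i) ⊔ J j) • (⊤ : Submodule R T) ≠ ⊤ := by
  classical
  obtain ⟨_, ⟨F, hF, rfl⟩, hmin⟩ := IsArtinian.set_has_minimal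
    ((fun F : Finset ι => (∏ i ∈ F, J i) • (⊤ : Submodule R T)) '' {F | ↑F ⊆ S})
    ⟨_, ∅, by simp, rfl⟩
  obtain ⟨j, hjS, hjF⟩ := hS.exists_notMem_finset F
  refine ⟨F, hF, j, hjS, hjF, fun h => hJ j hjS ?_⟩
  have smul_prod_smul : J j • (∏ i ∈ F, J i) • (⊤ : Submodule R T) = (∏ i ∈ F, J i) • ⊤ := by
    refine eq_of_le_of_not_lt Submodule.smul_le_right (hmin _ ⟨insert j F, ?_, ?_⟩)
    · simpa [Set.insert_subset_iff] using ⟨hjS, hF⟩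
    · simp only [Finset.prod_insert hjF, mul_smul]
  rw [Submodule.sup_smul, ← smul_prod_smul] at h
  exact top_le_iff.1 (h.ge.trans (sup_le (Submodule.smul_mono le_rfl le_top) le_rfl))

end PrimeSpectrum

namespace ExtColim

variable {R : Type u} [CommRing R] [IsNoetherianRing R] [IsLocalRing R]

local notation "𝔪" => IsLocalRing.maximalIdeal R

lemma vanishesAbove_of_ringKrullDim_le {a : Ideal R} {c : ℕ} (h : ringKrullDim (R ⧸ a) ≤ c) :
    VanishesAbove 𝔪 (R ⧸ a) c := by
  by_cases ha : a = ⊤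
  · have : Subsingleton (R ⧸ a) := Ideal.Quotient.subsingleton_iff.2 ha
    exact (VanishesAbove.of_powTorsion_eq_top (Subsingleton.elim _ _)).mono c.zero_le
  obtain ⟨s, hs, radical_eq⟩ := exists_finset_radical_sup_span_eq_maximalIdeal ha
  have card_le : 0 + s.card ≤ c := by simpa using hs.trans h
  have := (VanishesAbove.of_powTorsion_eq_top (powTorsion_quotient (I := a))).sup_span s
  refine (this.mono card_le).of_radical_eq ?_
  rw [radical_eq, (IsLocalRing.maximalIdeal.isMaximal R).isPrime.radical]

namespace VanishesAbove

lemma quotient_of_le {p q : Ideal R} {c : ℕ} (h : VanishesAbove 𝔪 (R ⧸ p) c) (hpq : p ≤ q) :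
    VanishesAbove 𝔪 (R ⧸ q) c :=
  h.of_le_annihilator (hpq.trans (Ideal.annihilator_quotient (I := q)).ge)

lemma coheight_le_zero {p : PrimeSpectrum R} (h : VanishesAbove 𝔪 (R ⧸ p.asIdeal) 0) :
    Order.coheight p ≤ 0 := by
  have p_eq : p.asIdeal = 𝔪 := by
    by_contra hp
    have := subsingleton_zero_of_ne hp
    have : Subsingleton (ExtColim 𝔪 0 (R ⧸ 𝔪)) :=
      (h.subsingleton_quotient_iff (IsLocalRing.le_maximalIdeal p.2.ne_top)).2
        (Subsingleton.elim _ _)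
    obtain ⟨z, hz⟩ : (1 : R ⧸ 𝔪) ∈ LinearMap.range (eval 𝔪 (R ⧸ 𝔪)) :=
      (range_eval.trans powTorsion_quotient).ge Submodule.mem_top
    rw [Subsingleton.elim z 0, map_zero] at hz
    exact zero_ne_one hz
  have isMax : IsMax p := fun q _ =>
    show q.asIdeal ≤ p.asIdeal from p_eq ▸ IsLocalRing.le_maximalIdeal q.2.ne_top
  exact (Order.coheight_eq_zero.2 isMax).le

lemma smul_top_ne_top {p q : PrimeSpectrum R} {c : ℕ}
    (h : VanishesAbove 𝔪 (R ⧸ p.asIdeal) (c + 1)) (hpq : p ≤ q)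
    (hq : ¬ VanishesAbove 𝔪 (R ⧸ q.asIdeal) c) :
    q.asIdeal • (⊤ : Submodule R (ExtColim 𝔪 (c + 1) (R ⧸ p.asIdeal))) ≠ ⊤ := by
  intro htop
  have subsingleton_q := (h.subsingleton_quotient_iff hpq).2 htop
  refine hq fun i hi => ?_
  rcases (Nat.succ_le_of_lt hi).eq_or_lt with rfl | hi
  exacts [subsingleton_q, h.quotient_of_le hpq i hi]

lemma coheight_le_succ {c : ℕ}
    (ih : ∀ q : PrimeSpectrum R, VanishesAbove 𝔪 (R ⧸ q.asIdeal) c → Order.coheight q ≤ c)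
    {p : PrimeSpectrum R} (hp : ∀ q > p, Order.coheight q ≤ (c + 1 : ℕ))
    (h : VanishesAbove 𝔪 (R ⧸ p.asIdeal) (c + 1)) : Order.coheight p ≤ (c + 1 : ℕ) := by
  by_contra! hlt
  obtain ⟨p₁, p₂, h₁, h₂, hp₂⟩ := exists_lt_lt_of_add_two_le_coheight (a := p) (n := c)
    (by exact_mod_cast Order.add_one_le_of_lt hlt)
  have not_vanishesAbove (q : PrimeSpectrum R) (hq : q < p₂) :
      ¬ VanishesAbove 𝔪 (R ⧸ q.asIdeal) c := fun hv => by
    have := ((add_le_add_left hp₂ 1).trans (Order.coheight_add_one_le hq)).trans (ih q hv)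
    norm_cast at this
    omega
  obtain ⟨F, hF, q, ⟨hpq, _⟩, hqF, hne⟩ := exists_prod_sup_smul_top_ne_top
    (infinite_Ioo_of_lt_of_lt h₁ h₂) PrimeSpectrum.asIdeal
    fun q hq => h.smul_top_ne_top hq.1.le (not_vanishesAbove q hq.2)
  have hpq' : p.asIdeal ≤ (∏ r ∈ F, r.asIdeal) ⊔ q.asIdeal := le_trans hpq.le le_sup_right
  refine hne ((h.subsingleton_quotient_iff hpq').1 ?_)
  refine vanishesAbove_of_ringKrullDim_le (ringKrullDim_quotient_le_of_coheight_le
    fun P hP => ?_) (c + 1) c.lt_succ_self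
  obtain ⟨r, hrF, hrP⟩ := (Ideal.IsPrime.prod_le P.2).1 (le_sup_left.trans hP)
  exact coheight_le_of_ne_of_le_of_le (ne_of_mem_of_not_mem hrF hqF) hrP (le_sup_right.trans hP)
    (hp r (hF hrF).1) (hp q hpq)

lemma coheight_le {c : ℕ} {p : PrimeSpectrum R} (h : VanishesAbove 𝔪 (R ⧸ p.asIdeal) c) :
    Order.coheight p ≤ c := by
  induction c generalizing p with
  | zero => exact_mod_cast h.coheight_le_zero
  | succ c ih =>
    have : WellFoundedGT (PrimeSpectrum R) := ⟨InvImage.wf PrimeSpectrum.asIdeal wellFounded_gt⟩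
    induction p using WellFoundedGT.induction with
    | ind p ihp =>
      exact h.coheight_le_succ (fun q => ih) fun q hq => ihp q hq (h.quotient_of_le hq.le)

/-- **Grothendieck's nonvanishing theorem**, as a bound on the dimension. -/
lemma ringKrullDim_le {c : ℕ} (h : VanishesAbove 𝔪 R c) : ringKrullDim R ≤ c := by
  have h' (p : PrimeSpectrum R) : VanishesAbove 𝔪 (R ⧸ p.asIdeal) c :=
    (h.of_linearEquiv (Submodule.quotEquivOfEqBot (⊥ : Ideal R) rfl).symm).quotient_of_le bot_le
  rw [ringKrullDim, Order.krullDim_eq_iSup_coheight]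
  exact iSup_le fun p => by exact_mod_cast (h' p).coheight_le

end VanishesAbove

end ExtColim

/-! ### Comparison with local cohomology -/

section LeftDerived

open HomologicalComplex

variable {C D : Type*} [Category* C] [Abelian C] [EnoughProjectives C] [Category* D] [Abelian D]
  (F : C ⥤ D) [F.Additive] {X X' : C} (P : ProjectiveResolution X) {n : ℕ} {J : D}

lemma exists_d_comp_eq_of_homologyι_comp_eq_zero (K : ChainComplex D ℕ) [Injective J]
    (e : K.opcycles (n + 1) ⟶ J) (he : K.homologyι (n + 1) ≫ e = 0) :
    ∃ h : K.X n ⟶ J, K.d (n + 1) n ≫ h = K.pOpcycles (n + 1) ≫ e := by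
  have exact : (ShortComplex.mk _ _ (K.homologyι_comp_fromOpcycles (n + 1) n)).Exact :=
    ShortComplex.exact_of_f_is_kernel _ (K.homologyIsKernel (n + 1) n (by simp))
  refine ⟨exact.descToInjective e he, ?_⟩
  rw [← K.p_fromOpcycles (n + 1) n, Category.assoc]
  exact congrArg _ (exact.comp_descToInjective e he)

/-- The morphism out of the `n`-th left derived functor of `F` induced by a morphism out of the
`n`-th term of a resolution that vanishes on boundaries. -/
noncomputable def leftDerivedDesc (f : F.obj (P.complex.X n) ⟶ J)
    (hf : F.map (P.complex.d (n + 1) n) ≫ f = 0) : (F.leftDerived n).obj X ⟶ J :=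
  (P.isoLeftDerivedObj F n).hom ≫ homologyι _ n ≫
    descOpcycles ((F.mapHomologicalComplex (ComplexShape.down ℕ)).obj P.complex) f (n + 1)
      (by simp) hf

variable {F P}

lemma map_comp_leftDerivedDesc {P' : ProjectiveResolution X'} {g : X' ⟶ X}
    {φ : P'.complex ⟶ P.complex} (hφ : φ.f 0 ≫ P.π.f 0 = P'.π.f 0 ≫ g)
    {f : F.obj (P.complex.X n) ⟶ J} (hf : F.map (P.complex.d (n + 1) n) ≫ f = 0) :
    (F.leftDerived n).map g ≫ leftDerivedDesc F P f hf =
      leftDerivedDesc F P' (F.map (φ.f n) ≫ f) (by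
        rw [← F.map_comp_assoc, ← φ.comm, F.map_comp_assoc, hf, Limits.comp_zero]) := by
  let ψ := (F.mapHomologicalComplex (ComplexShape.down ℕ)).map φ
  refine (ProjectiveResolution.isoLeftDerivedObj_hom_naturality_assoc g P' P φ hφ F n _).trans
    (congrArg _ ?_)
  exact (homologyι_naturality_assoc ψ n _).trans (congrArg _
    (opcyclesMap_comp_descOpcycles (φ := ψ) f (n + 1) (by simp) hf))

lemma exists_map_d_comp_eq_of_leftDerivedDesc_eq_zero [Injective J]
    {f : F.obj (P.complex.X (n + 1)) ⟶ J} {hf : F.map (P.complex.d (n + 2) (n + 1)) ≫ f = 0}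
    (h : leftDerivedDesc F P f hf = 0) :
    ∃ k : F.obj (P.complex.X n) ⟶ J, F.map (P.complex.d (n + 1) n) ≫ k = f := by
  obtain ⟨k, hk⟩ := exists_d_comp_eq_of_homologyι_comp_eq_zero _ _
    ((cancel_epi (P.isoLeftDerivedObj F (n + 1)).hom).1 (h.trans Limits.comp_zero.symm))
  exact ⟨k, hk.trans (p_descOpcycles ..)⟩

end LeftDerived

section Ext

open Opposite Limits

variable {R : Type u} [CommRing R]

/-- `w` is represented by the same cocycle as `z`; only the vanishing of its restrictions is
recorded, which is all the comparison of the two `Ext` functors needs. -/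
lemma exists_forall_mk₀_comp_eq_zero {X Y : ModuleCat.{u} R} {n : ℕ}
    (z : Abelian.Ext X Y (n + 1)) :
    ∃ w : ((Ext R (ModuleCat.{u} R) (n + 1)).obj (op X)).obj Y,
      ∀ {X' : ModuleCat.{u} R} (g : X' ⟶ X),
        ((Ext R (ModuleCat.{u} R) (n + 1)).map g.op).app Y w = 0 →
          (Abelian.Ext.mk₀ g).comp z (zero_add (n + 1)) = 0 := by
  let P := projectiveResolution X
  obtain ⟨f, hf, rfl⟩ := P.extMk_surjective z (n + 2) rfl
  let F := ((linearYoneda R (ModuleCat.{u} R)).obj Y).rightOp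
  let f' : F.obj (P.complex.X (n + 1)) ⟶ op (ModuleCat.of R R) :=
    (ModuleCat.ofHom (LinearMap.toSpanSingleton R (P.complex.X (n + 1) ⟶ Y) f)).op
  have hf' : F.map (P.complex.d (n + 2) (n + 1)) ≫ f' = 0 := Quiver.Hom.unop_inj <| by
    ext
    change P.complex.d (n + 2) (n + 1) ≫ ((1 : R) • f) = 0
    rw [one_smul, hf]
  refine ⟨(leftDerivedDesc F P f' hf').unop.hom (1 : R), fun {X'} g hg => ?_⟩
  let P' := projectiveResolution X'
  let φ : ProjectiveResolution.Hom P' P g :=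
    ⟨ProjectiveResolution.lift g P' P, ProjectiveResolution.lift_commutes_zero g P' P⟩
  have : Projective (ModuleCat.of R R) :=
    ModuleCat.projective_of_free (Module.Basis.singleton Unit R)
  obtain ⟨h, hh⟩ := exists_map_d_comp_eq_of_leftDerivedDesc_eq_zero
    ((map_comp_leftDerivedDesc φ.hom_f_zero_comp_π_f_zero hf').symm.trans
      (Quiver.Hom.unop_inj (by ext; exact hg)))
  rw [ProjectiveResolution.mk₀_comp_extMk _ _ _ _ φ,
    ProjectiveResolution.extMk_eq_zero_iff _ _ _ _ _ n rfl]
  have apply_one := congrArg (fun t => t.unop.hom (1 : R)) hh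
  exact ⟨h.unop.hom (1 : R), apply_one.trans (one_smul R (φ.hom.f (n + 1) ≫ f))⟩

end Ext

section LocalCohomology

open Opposite Limits

variable {R : Type u} [CommRing R]

instance preservesColimitsOfShape_forget_opOp_nat :
    PreservesColimitsOfShape ℕᵒᵖᵒᵖ (forget (ModuleCat.{u} R)) :=
  have : PreservesFilteredColimitsOfSize.{0, 0} (forget (ModuleCat.{u} R)) :=
    preservesFilteredColimitsOfSize_shrink.{0, u, 0, u} _
  PreservesFilteredColimitsOfSize.preserves_filtered_colimits _

lemma ExtColim.subsingleton_of_localCohomology {I : Ideal R} {n : ℕ} {M : Type u}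
    [AddCommGroup M] [Module R M]
    (h : Subsingleton ((localCohomology I (n + 1)).obj (ModuleCat.of R M))) :
    Subsingleton (ExtColim I (n + 1) M) := by
  have := localCohomology.hasColimitDiagram.{u, 0} (localCohomology.idealPowersDiagram I) (n + 1)
  have isColimit := isColimitOfPreserves ((evaluation _ _).obj (ModuleCat.of R M))
    (colimit.isColimit (localCohomology.diagram (localCohomology.idealPowersDiagram I) (n + 1)))
  refine subsingleton_of_forall_eq 0 fun z => ?_
  obtain ⟨k, x, rfl⟩ := exists_of z
  obtain ⟨w, hw⟩ := exists_forall_mk₀_comp_eq_zero x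
  obtain ⟨l, f, g, hfg⟩ := Concrete.isColimit_exists_of_rep_eq _ isColimit (i := op (op k))
    (j := op (op k)) w
    (0 : ((Ext R (ModuleCat.{u} R) (n + 1)).obj (op (ModuleCat.of R (R ⧸ I ^ k)))).obj _)
    (h.elim _ _)
  have res_eq_zero : res I (n + 1) M k l.unop.unop (leOfHom f.unop.unop) x = 0 :=
    hw _ (hfg.trans (map_zero _))
  rw [← of_res (leOfHom f.unop.unop), res_eq_zero, map_zero]

lemma isZero_localCohomology_top_succ (n : ℕ) :
    IsZero (localCohomology (⊤ : Ideal R) (n + 1)) := by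
  have := localCohomology.hasColimitDiagram.{u, 0}
    (localCohomology.idealPowersDiagram (⊤ : Ideal R)) (n + 1)
  refine (colimit.isColimit (localCohomology.diagram (localCohomology.idealPowersDiagram ⊤)
    (n + 1))).isZero_pt (Functor.isZero _ fun k => Functor.isZero _ fun Y => ?_)
  have : Subsingleton (R ⧸ (⊤ : Ideal R) ^ k.unop.unop) :=
    Ideal.Quotient.subsingleton_iff.2 (Ideal.top_pow R _)
  have : Projective (ModuleCat.of R (R ⧸ (⊤ : Ideal R) ^ k.unop.unop)) :=
    (ModuleCat.isZero_of_subsingleton _).projective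
  exact isZero_Ext_succ_of_projective (ModuleCat.of R (R ⧸ (⊤ : Ideal R) ^ k.unop.unop)) Y n

lemma cohomologicalDimension_top (M : ModuleCat.{u} R) :
    cohomologicalDimension (⊤ : Ideal R) M = 0 := by
  refine le_antisymm (sSup_le ?_) zero_le
  rintro _ ⟨_ | i, rfl, hi⟩
  · exact le_rfl
  · have := ModuleCat.subsingleton_of_isZero ((isZero_localCohomology_top_succ i).obj M)
    exact (not_nontrivial _ hi).elim

lemma ExtColim.vanishesAbove_of_cohomologicalDimension_le {I : Ideal R} {M : Type u}
    [AddCommGroup M] [Module R M] {c : ℕ} (h : cohomologicalDimension I (ModuleCat.of R M) ≤ c) :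
    VanishesAbove I M c := fun i hi => by
  obtain ⟨j, rfl⟩ := Nat.exists_eq_succ_of_ne_zero (Nat.ne_zero_of_lt hi)
  refine subsingleton_of_localCohomology (not_nontrivial_iff_subsingleton.1 fun hj => ?_)
  exact (h.trans_lt (Nat.cast_lt.2 hi)).not_ge (le_sSup ⟨_, rfl, hj⟩)

end LocalCohomology

/-! ### Height and dimension -/

section Height

variable {R : Type u} [CommRing R]

lemma idealHeight_le {I : Ideal R} {p : PrimeSpectrum R} (hp : I ≤ p.asIdeal) :
    idealHeight I ≤ Order.height p :=
  iInf₂_le p hp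

lemma idealHeight_top : idealHeight (⊤ : Ideal R) = ⊤ :=
  iInf₂_eq_top.2 fun p hp => (p.2.ne_top (top_le_iff.1 hp)).elim

lemma idealHeight_add_ringKrullDim_quotient_le {I : Ideal R} (hI : I ≠ ⊤) :
    (idealHeight I : WithBot ℕ∞) + ringKrullDim (R ⧸ I) ≤ ringKrullDim R := by
  have : Nontrivial (R ⧸ I) := Ideal.Quotient.nontrivial_iff.2 hI
  have : Nontrivial R := (Ideal.Quotient.mk I).domain_nontrivial
  have : Nonempty (PrimeSpectrum.zeroLocus (R := R) I) := by
    obtain ⟨m, hm, hle⟩ := Ideal.exists_le_maximal I hI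
    exact ⟨⟨⟨m, hm.isPrime⟩, hle⟩⟩
  rw [ringKrullDim_quotient, Order.krullDim_eq_iSup_coheight_of_nonempty, ringKrullDim,
    Order.krullDim_eq_iSup_height_add_coheight_of_nonempty, ← WithBot.coe_add, WithBot.coe_le_coe,
    ENat.add_iSup]
  refine iSup_le fun p => le_iSup_of_le p.1 (add_le_add (idealHeight_le p.2) ?_)
  exact Order.coheight_le_coheight_apply_of_strictMono _ (Subtype.strictMono_coe _) p

variable [IsNoetherianRing R] [IsLocalRing R]

lemma ExtColim.VanishesAbove.ringKrullDim_le_add {I : Ideal R} {c : ℕ} (h : VanishesAbove I R c)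
    (hI : I ≠ ⊤) : ringKrullDim R ≤ c + ringKrullDim (R ⧸ I) := by
  obtain ⟨s, hs, radical_eq⟩ := exists_finset_radical_sup_span_eq_maximalIdeal hI
  have hs' := (h.sup_span s).of_radical_eq <| radical_eq.trans
    (IsLocalRing.maximalIdeal.isMaximal R).isPrime.radical.symm
  calc ringKrullDim R ≤ (c + s.card : ℕ) := hs'.ringKrullDim_le
    _ = c + (s.card : WithBot ℕ∞) := by push_cast; rfl
    _ ≤ c + ringKrullDim (R ⧸ I) := by gcongr

lemma ringKrullDim_le_cohomologicalDimension_add {I : Ideal R} (hI : I ≠ ⊤) :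
    ringKrullDim R ≤ (cohomologicalDimension I (ModuleCat.of R R) : WithBot ℕ∞) +
      ringKrullDim (R ⧸ I) := by
  have : Nontrivial (R ⧸ I) := Ideal.Quotient.nontrivial_iff.2 hI
  cases hc : cohomologicalDimension I (ModuleCat.of R R) with
  | top => exact le_top.trans (le_add_of_nonneg_right ringKrullDim_nonneg_of_nontrivial)
  | coe c =>
    have h := ExtColim.vanishesAbove_of_cohomologicalDimension_le hc.le
    exact_mod_cast h.ringKrullDim_le_add hI

end Height

/-- over a Noetherian local ring `R` of Krull dimension `n`, if
`cd(I) = ht(I)` then `dim R = ht(I) + dim (R/I)`. -/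
theorem ringKrullDim_eq_height_add_ringKrullDim_quotient
    (R : Type u) [CommRing R] [IsNoetherianRing R] [IsLocalRing R] (n : ℕ)
    (hn : ringKrullDim R = (n : WithBot ℕ∞)) (I : Ideal R)
    (hI : cohomologicalDimension I (ModuleCat.of R R) = idealHeight I) :
    Order.krullDim (PrimeSpectrum R) =
      (idealHeight I : WithBot ℕ∞) + Order.krullDim (PrimeSpectrum (R ⧸ I)) := by
  have I_ne_top : I ≠ ⊤ := by
    rintro rfl
    simp [cohomologicalDimension_top, idealHeight_top] at hI
  refine le_antisymm ?_ (idealHeight_add_ringKrullDim_quotient_le I_ne_top)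
  rw [← hI]
  exact ringKrullDim_le_cohomologicalDimension_add I_ne_top
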